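/- arXiv:1404.7205 — 4 statements merged into one kernel-verified Lean document; each statement's English description precedes it below -/
import Mathlib

section
/- The module union operator ⊔ is commutative and associative and has identity element ⟨∅,∅,∅,∅⟩: whenever P1 ⊔ P2 is defined, so is P2 ⊔ P1 and P1 ⊔ P2 = P2 ⊔ P1; whenever (P1 ⊔ P2) ⊔ P3 and P1 ⊔ (P2 ⊔ P3) are both defined, they are equal; and for every module P, P ⊔ ⟨∅,∅,∅,∅⟩ is defined and equals P. -/
open scoped Classical

noncomputable section

/-- A rule: an optional head atom (none = integrity constraint), a flag marking
choice facts, a set of positive body atoms and a set of negative body atoms. -/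
structure ASPRule (A : Type*) where
  head : Option A
  isChoice : Bool
  pos : Set A
  neg : Set A

/-- Atoms occurring in a rule. -/
def ASPRule.atoms {A : Type*} (r : ASPRule A) : Set A :=
  (r.head.elim ∅ fun a => {a}) ∪ r.pos ∪ r.neg

/-- Atoms occurring in a program. -/
def progAtoms {A : Type*} (R : Set (ASPRule A)) : Set A :=
  ⋃ r ∈ R, r.atoms

/-- Least model of a positive program (pairs of head and positive body):
the least set of atoms closed under the rules. -/
def LM {A : Type*} (Q : Set (A × Set A)) : Set A :=
  ⋂₀ {S | ∀ p ∈ Q, p.2 ⊆ S → p.1 ∈ S}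

/-- The reduct of a program w.r.t. an interpretation `M`: it contains
`head(r) ← body⁺(r)` for every headed non-choice rule whose negative body is
disjoint from `M`, and the fact `a` for every choice fact `{a}` with `a ∈ M`. -/
def reduct {A : Type*} (R : Set (ASPRule A)) (M : Set A) : Set (A × Set A) :=
  {p | ∃ r ∈ R,
    (r.isChoice = false ∧ r.head = some p.1 ∧ r.pos = p.2 ∧ r.neg ∩ M = ∅) ∨
    (r.isChoice = true ∧ r.head = some p.1 ∧ p.2 = (∅ : Set A) ∧ p.1 ∈ M)}

/-- `M` is a stable model of program `R`: `M = LM(R^M)` and every integrity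
constraint whose negative body avoids `M` has a positive body not contained in `M`. -/
def stableModel {A : Type*} (R : Set (ASPRule A)) (M : Set A) : Prop :=
  M = LM (reduct R M) ∧
  ∀ r ∈ R, r.head = none → r.neg ∩ M = ∅ → ¬ r.pos ⊆ M

/-- Facts for a set of (input) atoms. -/
def inputFacts {A : Type*} (X : Set A) : Set (ASPRule A) :=
  {r | ∃ a ∈ X, r = ⟨some a, false, ∅, ∅⟩}

/-- Choice facts `{a}` for a set of atoms. -/
def choiceFacts {A : Type*} (X : Set A) : Set (ASPRule A) :=
  {r | ∃ a ∈ X, r = ⟨some a, true, ∅, ∅⟩}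

/-- An (unbundled) ASP program module `⟨R, I, O, H⟩`. -/
structure PreModule (A : Type*) where
  rules : Set (ASPRule A)
  I : Set A
  O : Set A
  H : Set A

namespace PreModule

variable {A : Type*}

/-- `At(P) = I ∪ O ∪ H`. -/
def atoms (P : PreModule A) : Set A := P.I ∪ P.O ∪ P.H

/-- Visible atoms `At_v(P) = I ∪ O`. -/
def Atv (P : PreModule A) : Set A := P.I ∪ P.O

/-- Well-formedness of a module: `I`, `O`, `H` pairwise disjoint, the atoms
of the rules lie in `At(P)`, and no rule head is an input atom. -/
def wf (P : PreModule A) : Prop :=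
  Disjoint P.I P.O ∧ Disjoint P.I P.H ∧ Disjoint P.O P.H ∧
  progAtoms P.rules ⊆ P.atoms ∧
  ∀ r ∈ P.rules, ∀ a, r.head = some a → a ∉ P.I

/-- Stable models of a module: `M ⊆ At(P)` that are stable models of the rules
together with a fact for every true input atom. -/
def AS (P : PreModule A) : Set (Set A) :=
  {M | M ⊆ P.atoms ∧ stableModel (P.rules ∪ inputFacts (M ∩ P.I)) M}

end PreModule

/-- Edge of the positive dependency graph: from `a` to `b` whenever some rule
has head `b` and `a` in its positive body. -/
def depEdge {A : Type*} (R : Set (ASPRule A)) (a b : A) : Prop :=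
  ∃ r ∈ R, r.head = some b ∧ a ∈ r.pos

/-- `P1` and `P2` are mutually independent: no cycle of the positive dependency
graph of `R1 ∪ R2` passes through atoms of both `At(P1)` and `At(P2)`. -/
def mutuallyIndependent {A : Type*} (P1 P2 : PreModule A) : Prop :=
  ¬ ∃ x y, x ∈ P1.atoms ∧ y ∈ P2.atoms ∧
      Relation.TransGen (depEdge (P1.rules ∪ P2.rules)) x y ∧
      Relation.TransGen (depEdge (P1.rules ∪ P2.rules)) y x

/-- Composition `P1 ⊕ P2`. -/
def oplus {A : Type*} (P1 P2 : PreModule A) : PreModule A :=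
  ⟨P1.rules ∪ P2.rules, (P1.I \ P2.O) ∪ (P2.I \ P1.O), P1.O ∪ P2.O, P1.H ∪ P2.H⟩

/-- `P1 ⊕ P2` is defined. -/
def oplusDefined {A : Type*} (P1 P2 : PreModule A) : Prop :=
  P1.O ∩ P2.O = ∅ ∧ P1.H ∩ P2.atoms = ∅ ∧ P2.H ∩ P1.atoms = ∅

/-- The module union `P1 ⊔ P2` is defined: `P1 ⊕ P2` is defined and `P1`, `P2`
are mutually independent (in which case `P1 ⊔ P2 = P1 ⊕ P2`). -/
def sqcupDefined {A : Type*} (P1 P2 : PreModule A) : Prop :=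
  oplusDefined P1 P2 ∧ mutuallyIndependent P1 P2

/-- Natural join of sets of interpretations w.r.t. modules `P1`, `P2`. -/
def natJoin {A : Type*} (P1 P2 : PreModule A) (A1 A2 : Set (Set A)) : Set (Set A) :=
  {M | ∃ M1 ∈ A1, ∃ M2 ∈ A2, M1 ∩ P2.Atv = M2 ∩ P1.Atv ∧ M = M1 ∪ M2}

/-- Relaxed composition `P1 ⊎ P2` (common output atoms allowed). -/
def uplus {A : Type*} (P1 P2 : PreModule A) : PreModule A :=
  ⟨P1.rules ∪ P2.rules, (P1.I ∪ P2.I) \ (P1.O ∪ P2.O), P1.O ∪ P2.O, P1.H ∪ P2.H⟩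

/-- `P1 ⊎ P2` is defined: the modules respect each other's hidden atoms. -/
def uplusDefined {A : Type*} (P1 P2 : PreModule A) : Prop :=
  P1.H ∩ P2.atoms = ∅ ∧ P2.H ∩ P1.atoms = ∅

/-- Hiding a set `S` of atoms in a module. -/
def hideS {A : Type*} (P : PreModule A) (S : Set A) : PreModule A :=
  ⟨P.rules ∪ choiceFacts (P.I ∩ S), P.I \ S, P.O \ S, P.H ∪ (P.Atv ∩ S)⟩

/-- Projecting a module onto a set `S` of atoms. -/
def projectS {A : Type*} (P : PreModule A) (S : Set A) : PreModule A :=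
  ⟨P.rules ∪ choiceFacts (P.I \ S), P.I ∩ S, P.O ∩ S, P.H ∪ (P.Atv \ S)⟩

/-- Renaming the head `o` of a rule to `o'`. -/
def renameRule {A : Type*} (o o' : A) (r : ASPRule A) : ASPRule A :=
  if r.head = some o then { r with head := some o' } else r

/-- Renamed output module `ρ_{o'←o}(P)`. -/
def renameOut {A : Type*} (P : PreModule A) (o o' : A) : PreModule A :=
  ⟨(renameRule o o' '' P.rules) ∪ {⟨none, false, {o'}, {o}⟩},
   P.I ∪ {o}, {o'} ∪ (P.O \ {o}), P.H⟩

/-- Renaming heads in a rule for every atom of `Os`, via `f`. -/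
def renameRuleS {A : Type*} (Os : Set A) (f : A → A) (r : ASPRule A) : ASPRule A :=
  { r with head := r.head.map fun a => if a ∈ Os then f a else a }

/-- Renamed output module `ρ_{O'←O}(P)` where `O' = f '' Os` atom by atom. -/
def renameOutS {A : Type*} (P : PreModule A) (Os : Set A) (f : A → A) : PreModule A :=
  ⟨(renameRuleS Os f '' P.rules) ∪ {r | ∃ o ∈ Os, r = ⟨none, false, {f o}, {o}⟩},
   P.I ∪ Os, (f '' Os) ∪ (P.O \ Os), P.H⟩

/-- The module `P_union` with rules `o ← o'` and `o ← o''` for each `o ∈ Os`,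
where `o' = f' o` and `o'' = f'' o`. -/
def Punion {A : Type*} (Os : Set A) (f' f'' : A → A) : PreModule A :=
  ⟨{r | ∃ o ∈ Os, r = ⟨some o, false, {f' o}, ∅⟩ ∨ r = ⟨some o, false, {f'' o}, ∅⟩},
   (f' '' Os) ∪ (f'' '' Os), Os, ∅⟩

/-- The module `P_filter` with constraints `⊥ ← o', not o''` and `⊥ ← not o', o''`. -/
def Pfilter {A : Type*} (Os : Set A) (f' f'' : A → A) : PreModule A :=
  ⟨{r | ∃ o ∈ Os, r = ⟨none, false, {f' o}, {f'' o}⟩ ∨ r = ⟨none, false, {f'' o}, {f' o}⟩},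
   (f' '' Os) ∪ (f'' '' Os), ∅, ∅⟩

/-- Transformed relaxed composition `P1 ⊎^RT P2`, with fresh primed and
double-primed atoms given by `f'` and `f''` on `O = O1 ∩ O2`. -/
def uplusRT {A : Type*} (P1 P2 : PreModule A) (f' f'' : A → A) : PreModule A :=
  hideS
    (oplus (oplus (renameOutS P1 (P1.O ∩ P2.O) f') (renameOutS P2 (P1.O ∩ P2.O) f''))
      (Punion (P1.O ∩ P2.O) f' f''))
    ((f' '' (P1.O ∩ P2.O)) ∪ (f'' '' (P1.O ∩ P2.O)))

/-- Conservative composition `P1 ⊗ P2`, with fresh primed and double-primed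
atoms given by `f'` and `f''` on `O = O1 ∩ O2`. -/
def otimesC {A : Type*} (P1 P2 : PreModule A) (f' f'' : A → A) : PreModule A :=
  hideS
    (oplus
      (oplus (oplus (renameOutS P1 (P1.O ∩ P2.O) f') (renameOutS P2 (P1.O ∩ P2.O) f''))
        (Punion (P1.O ∩ P2.O) f' f''))
      (Pfilter (P1.O ∩ P2.O) f' f''))
    ((f' '' (P1.O ∩ P2.O)) ∪ (f'' '' (P1.O ∩ P2.O)))

/-- The atoms `O' = f' '' (O1 ∩ O2)` and `O'' = f'' '' (O1 ∩ O2)` are fresh: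
`f'`, `f''` are injective on `O1 ∩ O2`, the images avoid all atoms of `P1` and
`P2`, and the two images are disjoint. -/
def freshPair {A : Type*} (P1 P2 : PreModule A) (f' f'' : A → A) : Prop :=
  Set.InjOn f' (P1.O ∩ P2.O) ∧ Set.InjOn f'' (P1.O ∩ P2.O) ∧
  (f' '' (P1.O ∩ P2.O)) ∩ (P1.atoms ∪ P2.atoms) = ∅ ∧
  (f'' '' (P1.O ∩ P2.O)) ∩ (P1.atoms ∪ P2.atoms) = ∅ ∧
  (f' '' (P1.O ∩ P2.O)) ∩ (f'' '' (P1.O ∩ P2.O)) = ∅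

/-- Modular equivalence `P ≡_m Q`: same input signature, same visible atoms,
and a bijection between the stable models preserving the visible parts. -/
def modEquiv {A : Type*} (P Q : PreModule A) : Prop :=
  P.I = Q.I ∧ P.Atv = Q.Atv ∧
  ∃ f : Set A → Set A, Set.BijOn f P.AS Q.AS ∧
    ∀ M ∈ P.AS, M ∩ P.Atv = f M ∩ Q.Atv

end

/-!
An atom is an input of a composition of modules exactly when it is an input of one component and an
output of none of the others. This description, like the unions forming the rules, outputs and
hidden atoms, depends neither on the order nor on the bracketing of the components.
-/

section ModuleUnion

variable {A : Type*} {P1 P2 : PreModule A}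

theorem oplus_comm (P1 P2 : PreModule A) : oplus P1 P2 = oplus P2 P1 := by
  unfold oplus
  congr 1 <;> exact Set.union_comm _ _

theorem oplus_inputs_assoc (P1 P2 P3 : PreModule A) :
    (oplus (oplus P1 P2) P3).I = (oplus P1 (oplus P2 P3)).I :=
  calc (P1.I \ P2.O ∪ P2.I \ P1.O) \ P3.O ∪ P3.I \ (P1.O ∪ P2.O)
    _ = P1.I \ (P2.O ∪ P3.O) ∪ P2.I \ (P1.O ∪ P3.O) ∪ P3.I \ (P1.O ∪ P2.O) := by
      rw [Set.union_sdiff_distrib, Set.sdiff_sdiff, Set.sdiff_sdiff]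
    _ = P1.I \ (P2.O ∪ P3.O) ∪ (P2.I \ (P3.O ∪ P1.O) ∪ P3.I \ (P2.O ∪ P1.O)) := by
      rw [Set.union_assoc, Set.union_comm P1.O, Set.union_comm P1.O]
    _ = P1.I \ (P2.O ∪ P3.O) ∪ (P2.I \ P3.O ∪ P3.I \ P2.O) \ P1.O := by
      rw [Set.union_sdiff_distrib, Set.sdiff_sdiff, Set.sdiff_sdiff]

theorem oplus_assoc (P1 P2 P3 : PreModule A) :
    oplus (oplus P1 P2) P3 = oplus P1 (oplus P2 P3) :=
  PreModule.mk.injEq .. |>.mpr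
    ⟨Set.union_assoc .., oplus_inputs_assoc P1 P2 P3, Set.union_assoc .., Set.union_assoc ..⟩

theorem oplus_empty (P : PreModule A) : oplus P ⟨∅, ∅, ∅, ∅⟩ = P := by
  simp only [oplus, Set.union_empty, Set.sdiff_empty, Set.empty_sdiff]

theorem oplusDefined.symm (h : oplusDefined P1 P2) : oplusDefined P2 P1 :=
  have ⟨hO, hH1, hH2⟩ := h
  ⟨Set.inter_comm P1.O P2.O ▸ hO, hH2, hH1⟩

theorem mutuallyIndependent.symm (h : mutuallyIndependent P1 P2) : mutuallyIndependent P2 P1 := by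
  rintro ⟨x, y, hx, hy, hxy, hyx⟩
  rw [Set.union_comm] at hxy hyx
  exact h ⟨y, x, hy, hx, hyx, hxy⟩

theorem sqcupDefined.symm (h : sqcupDefined P1 P2) : sqcupDefined P2 P1 :=
  ⟨h.1.symm, h.2.symm⟩

theorem oplusDefined_of_atoms_eq_empty (h : P2.atoms = ∅) : oplusDefined P1 P2 := by
  obtain ⟨⟨-, hO⟩, hH⟩ : (P2.I = ∅ ∧ P2.O = ∅) ∧ P2.H = ∅ := by
    simpa only [PreModule.atoms, Set.union_empty_iff] using h
  simp only [oplusDefined, h, hO, hH, Set.inter_empty, Set.empty_inter, and_self]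

theorem mutuallyIndependent_of_atoms_eq_empty (h : P2.atoms = ∅) : mutuallyIndependent P1 P2 :=
  fun ⟨_, y, _, hy, _⟩ => Set.eq_empty_iff_forall_notMem.mp h y hy

theorem sqcupDefined_empty (P : PreModule A) : sqcupDefined P ⟨∅, ∅, ∅, ∅⟩ :=
  have no_atoms : (⟨∅, ∅, ∅, ∅⟩ : PreModule A).atoms = ∅ := by
    simp only [PreModule.atoms, Set.union_empty]
  ⟨oplusDefined_of_atoms_eq_empty no_atoms, mutuallyIndependent_of_atoms_eq_empty no_atoms⟩

theorem sqcup_comm_assoc_identity_general :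
    (∀ P1 P2 : PreModule A, sqcupDefined P1 P2 →
      sqcupDefined P2 P1 ∧ oplus P1 P2 = oplus P2 P1) ∧
    (∀ P1 P2 P3 : PreModule A, oplus (oplus P1 P2) P3 = oplus P1 (oplus P2 P3)) ∧
    (∀ P : PreModule A, sqcupDefined P ⟨∅, ∅, ∅, ∅⟩ ∧ oplus P ⟨∅, ∅, ∅, ∅⟩ = P) :=
  ⟨fun P1 P2 h => ⟨h.symm, oplus_comm P1 P2⟩, oplus_assoc,
    fun P => ⟨sqcupDefined_empty P, oplus_empty P⟩⟩

end ModuleUnion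

/-- The module union operator `⊔` is commutative, associative, and has identity
element `⟨∅,∅,∅,∅⟩`. -/
theorem sqcup_comm_assoc_identity {A : Type*} :
    (∀ P1 P2 : PreModule A, P1.wf → P2.wf → sqcupDefined P1 P2 →
      sqcupDefined P2 P1 ∧ oplus P1 P2 = oplus P2 P1) ∧
    (∀ P1 P2 P3 : PreModule A, P1.wf → P2.wf → P3.wf →
      sqcupDefined P1 P2 → sqcupDefined (oplus P1 P2) P3 →
      sqcupDefined P2 P3 → sqcupDefined P1 (oplus P2 P3) →
      oplus (oplus P1 P2) P3 = oplus P1 (oplus P2 P3)) ∧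
    (∀ P : PreModule A, P.wf →
      sqcupDefined P ⟨∅, ∅, ∅, ∅⟩ ∧ oplus P ⟨∅, ∅, ∅, ∅⟩ = P) := by
  obtain ⟨comm, assoc, identity⟩ := sqcup_comm_assoc_identity_general (A := A)
  exact ⟨fun P Q _ _ => comm P Q, fun P Q R _ _ _ _ _ _ _ => assoc P Q R, fun P _ => identity P⟩
end

section
/- For every ASP program module P = ⟨R, I, O, H⟩ and every set S of atoms, the Hide operation does not change the stable models but removes S from the visible signature: AS(P ∖ S) = AS(P) and At_v(P ∖ S) = At_v(P) ∖ S. -/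
open scoped Classical

/-! The reduct with respect to `M` turns a choice fact `{a}` into the fact `a` when `a ∈ M` and into
nothing otherwise, which is exactly what declaring `a` an input atom contributes. So demoting the
inputs in `S` to hidden atoms guarded by choice facts leaves the reduct unchanged. -/

section Program

variable {A : Type*}

theorem reduct_union (R R' : Set (ASPRule A)) (M : Set A) :
    reduct (R ∪ R') M = reduct R M ∪ reduct R' M := by
  ext p
  simp only [reduct, Set.mem_union, Set.mem_ofPred_eq, or_and_right, exists_or]

theorem reduct_inputFacts (X M : Set A) :
    reduct (inputFacts X) M = (fun a => (a, ∅)) '' X := by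
  ext p
  constructor
  · rintro ⟨_, ⟨a, ha, rfl⟩, ⟨-, hhead, hpos, -⟩ | ⟨hchoice, -⟩⟩
    · exact ⟨a, ha, Prod.ext (Option.some.inj hhead) hpos⟩
    · exact absurd hchoice Bool.false_ne_true
  · rintro ⟨a, ha, rfl⟩
    exact ⟨_, ⟨a, ha, rfl⟩, Or.inl ⟨rfl, rfl, rfl, Set.empty_inter M⟩⟩

theorem reduct_choiceFacts (X M : Set A) :
    reduct (choiceFacts X) M = (fun a => (a, ∅)) '' (M ∩ X) := by
  ext p
  constructor
  · rintro ⟨_, ⟨a, ha, rfl⟩, ⟨hchoice, -⟩ | ⟨-, hhead, hpos, hM⟩⟩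
    · exact absurd hchoice.symm Bool.false_ne_true
    · obtain rfl : a = p.1 := Option.some.inj hhead
      exact ⟨p.1, ⟨hM, ha⟩, Prod.ext rfl hpos.symm⟩
  · rintro ⟨a, ⟨hM, ha⟩, rfl⟩
    exact ⟨_, ⟨a, ha, rfl⟩, Or.inr ⟨rfl, rfl, rfl, hM⟩⟩

theorem inputFacts_union (X Y : Set A) :
    inputFacts (X ∪ Y) = inputFacts X ∪ inputFacts Y := by
  ext r
  simp only [inputFacts, Set.mem_union, Set.mem_ofPred_eq, or_and_right, exists_or]

theorem head_ne_none_of_mem_inputFacts {X : Set A} {r : ASPRule A} (hr : r ∈ inputFacts X) :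
    r.head ≠ none := by
  obtain ⟨a, -, rfl⟩ := hr
  exact Option.some_ne_none a

theorem head_ne_none_of_mem_choiceFacts {X : Set A} {r : ASPRule A} (hr : r ∈ choiceFacts X) :
    r.head ≠ none := by
  obtain ⟨a, -, rfl⟩ := hr
  exact Option.some_ne_none a

theorem stableModel_union_congr {R F G : Set (ASPRule A)} {M : Set A}
    (hF : ∀ r ∈ F, r.head ≠ none) (hG : ∀ r ∈ G, r.head ≠ none)
    (hFG : reduct F M = reduct G M) :
    stableModel (R ∪ F) M ↔ stableModel (R ∪ G) M := by
  have constraints_hold {Q : Set (ASPRule A)} (hQ : ∀ r ∈ Q, r.head ≠ none) :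
      ∀ r ∈ Q, r.head = none → r.neg ∩ M = ∅ → ¬ r.pos ⊆ M :=
    fun r hr hnone => absurd hnone (hQ r hr)
  simp only [stableModel, reduct_union, hFG, Set.mem_union, or_imp, forall_and,
    and_iff_left (constraints_hold hF), and_iff_left (constraints_hold hG)]

theorem stableModel_union_choiceFacts (R : Set (ASPRule A)) (X M : Set A) :
    stableModel (R ∪ choiceFacts X) M ↔ stableModel (R ∪ inputFacts (M ∩ X)) M :=
  stableModel_union_congr (fun _ => head_ne_none_of_mem_choiceFacts)
    (fun _ => head_ne_none_of_mem_inputFacts)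
    ((reduct_choiceFacts X M).trans (reduct_inputFacts (M ∩ X) M).symm)

end Program

namespace PreModule

variable {A : Type*} (P : PreModule A) (S : Set A)

theorem Atv_hideS : (hideS P S).Atv = P.Atv \ S :=
  Set.union_sdiff_distrib.symm

theorem atoms_hideS : (hideS P S).atoms = P.atoms :=
  calc (hideS P S).atoms
    _ = (hideS P S).Atv ∪ (P.H ∪ P.Atv ∩ S) := rfl
    _ = P.Atv \ S ∪ P.Atv ∩ S ∪ P.H := by rw [Atv_hideS, Set.union_comm P.H, Set.union_assoc]
    _ = P.Atv ∪ P.H := by rw [Set.sdiff_union_inter]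

theorem stableModel_hideS (M : Set A) :
    stableModel ((hideS P S).rules ∪ inputFacts (M ∩ (hideS P S).I)) M ↔
      stableModel (P.rules ∪ inputFacts (M ∩ P.I)) M :=
  calc stableModel (P.rules ∪ choiceFacts (P.I ∩ S) ∪ inputFacts (M ∩ (P.I \ S))) M
    _ ↔ stableModel (P.rules ∪ inputFacts (M ∩ (P.I \ S)) ∪ choiceFacts (P.I ∩ S)) M := by
      rw [Set.union_right_comm]
    _ ↔ stableModel (P.rules ∪ inputFacts (M ∩ (P.I \ S)) ∪ inputFacts (M ∩ (P.I ∩ S))) M :=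
      stableModel_union_choiceFacts _ _ _
    _ ↔ stableModel (P.rules ∪ inputFacts (M ∩ P.I)) M := by
      rw [Set.union_assoc, ← inputFacts_union, ← Set.inter_union_distrib_left,
        Set.sdiff_union_inter]

theorem AS_hideS : (hideS P S).AS = P.AS := by
  ext M
  simp only [AS, Set.mem_ofPred_eq, atoms_hideS, stableModel_hideS]

end PreModule

theorem hide_AS_and_visible_general {A : Type*} (P : PreModule A) (S : Set A) :
    (hideS P S).AS = P.AS ∧ (hideS P S).Atv = P.Atv \ S :=
  ⟨P.AS_hideS S, P.Atv_hideS S⟩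

/-- Hiding a set `S` of atoms does not change the stable models of a module but
removes `S` from the visible signature. -/
theorem hide_AS_and_visible {A : Type*} (P : PreModule A) (hwf : P.wf) (S : Set A) :
    (hideS P S).AS = P.AS ∧ (hideS P S).Atv = P.Atv \ S := by
  exact hide_AS_and_visible_general P S
end

section
/- Allowing common output atoms invalidates the module theorem: there exist ASP program modules P1 and P2 that respect each other's hidden atoms and are mutually independent but have O1 ∩ O2 ≠ ∅, such that AS(P1 ⊎ P2) ≠ AS(P1) ⋈ AS(P2). (Witnesses: P1 = ⟨{exp(c2).}, ∅, {exp(c2), exp(c3)}, ∅⟩ and P2 = ⟨{exp(c3).}, ∅, {exp(c1), exp(c2), exp(c3)}, ∅⟩, for which AS(P1 ⊎ P2) = {{exp(c2), exp(c3)}} while AS(P1) ⋈ AS(P2) = ∅.) -/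
open scoped Classical

/-! A program of facts has exactly one stable model, and the composition of two such programs is
again a program of facts. The composition therefore always has a stable model, whereas the join is
empty as soon as the two unique stable models disagree on a shared visible atom, that is, on a
common output which only one of the modules derives: take one module stating an atom as a fact and
another declaring it as an output without any rule for it. -/

section Facts

variable {A : Type*}

theorem progAtoms_inputFacts (X : Set A) : progAtoms (inputFacts X) = X := by
  ext x
  simp [progAtoms, inputFacts, ASPRule.atoms]

theorem LM_image_prodMk_empty (X : Set A) : LM ((fun a => (a, ∅)) '' X) = X := by
  apply Set.Subset.antisymm
  · apply Set.sInter_subset_of_mem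
    rintro _ ⟨a, ha, rfl⟩ -
    exact ha
  · intro a ha S hS
    exact hS (a, ∅) ⟨a, ha, rfl⟩ (Set.empty_subset S)

theorem stableModel_inputFacts_iff {X M : Set A} : stableModel (inputFacts X) M ↔ M = X := by
  have no_constraint : ∀ r ∈ inputFacts X, r.head ≠ none := by
    rintro _ ⟨a, -, rfl⟩
    exact Option.some_ne_none a
  rw [stableModel, reduct_inputFacts, LM_image_prodMk_empty]
  exact and_iff_left fun r hr hnone => absurd hnone (no_constraint r hr)

end Facts

section Modules

variable {A : Type*} {P₁ P₂ : PreModule A}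

theorem mutuallyIndependent_of_forall_pos_eq_empty
    (h : ∀ r ∈ P₁.rules ∪ P₂.rules, r.pos = ∅) : mutuallyIndependent P₁ P₂ := by
  rintro ⟨x, y, -, -, hxy, -⟩
  obtain ⟨_, ⟨r, hr, -, hx⟩, -⟩ := Relation.TransGen.head'_iff.mp hxy
  exact Set.notMem_empty x (h r hr ▸ hx)

theorem natJoin_singleton_singleton_eq_empty {M₁ M₂ : Set A}
    (h : M₁ ∩ P₂.Atv ≠ M₂ ∩ P₁.Atv) : natJoin P₁ P₂ {M₁} {M₂} = ∅ := by
  rw [Set.eq_empty_iff_forall_notMem]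
  rintro _ ⟨_, rfl, _, rfl, hagree, -⟩
  exact h hagree

end Modules

/-- The module `⟨{a. | a ∈ X}, ∅, O, ∅⟩`, whose rules are facts and whose atoms are all outputs; two
of these form the counterexample. The facts are encoded by `inputFacts`, although the module has no
input atoms. -/
def factModule {A : Type*} (X O : Set A) : PreModule A :=
  ⟨inputFacts X, ∅, O, ∅⟩

namespace factModule

variable {A : Type*} {X Y O U : Set A}

protected theorem wf (hX : X ⊆ O) : (factModule X O).wf := by
  refine ⟨Set.empty_disjoint _, Set.empty_disjoint _, Set.disjoint_empty _, ?_,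
    fun _ _ a _ => Set.notMem_empty a⟩
  simpa [factModule, PreModule.atoms, progAtoms_inputFacts] using hX

theorem AS_eq (hX : X ⊆ O) : (factModule X O).AS = {X} := by
  ext M
  have mem_iff : M ∈ (factModule X O).AS ↔ M ⊆ O ∧ M = X := by
    simp only [PreModule.AS, PreModule.atoms, factModule, Set.mem_ofPred_eq, ← inputFacts_union,
      stableModel_inputFacts_iff, Set.inter_empty, Set.union_empty, Set.empty_union]
  rw [mem_iff, Set.mem_singleton_iff]
  exact and_iff_right_of_imp fun hM => hM ▸ hX

theorem uplus_eq (X Y O U : Set A) :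
    uplus (factModule X O) (factModule Y U) = factModule (X ∪ Y) (O ∪ U) := by
  simp only [uplus, factModule, inputFacts_union, Set.union_empty, Set.empty_sdiff]

protected theorem uplusDefined (X Y O U : Set A) : uplusDefined (factModule X O) (factModule Y U) :=
  ⟨Set.empty_inter _, Set.empty_inter _⟩

protected theorem mutuallyIndependent (X Y O U : Set A) :
    mutuallyIndependent (factModule X O) (factModule Y U) := by
  apply mutuallyIndependent_of_forall_pos_eq_empty
  rintro _ (⟨a, -, rfl⟩ | ⟨a, -, rfl⟩) <;> rfl

theorem AS_uplus_ne_natJoin (hX : X ⊆ O) (hY : Y ⊆ U) (hne : X ∩ U ≠ Y ∩ O) :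
    (uplus (factModule X O) (factModule Y U)).AS ≠
      natJoin (factModule X O) (factModule Y U) (factModule X O).AS (factModule Y U).AS := by
  have join_empty : natJoin (factModule X O) (factModule Y U) {X} {Y} = ∅ := by
    apply natJoin_singleton_singleton_eq_empty
    simpa only [PreModule.Atv, factModule, Set.empty_union] using hne
  rw [uplus_eq, AS_eq (Set.union_subset_union hX hY), AS_eq hX, AS_eq hY, join_empty]
  exact Set.singleton_ne_empty (X ∪ Y)

end factModule

theorem common_outputs_invalidate_module_theorem_general {A : Type*} [Nonempty A] :
    ∃ P1 P2 : PreModule A,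
      P1.wf ∧ P2.wf ∧ uplusDefined P1 P2 ∧ mutuallyIndependent P1 P2 ∧
      P1.O ∩ P2.O ≠ ∅ ∧
      (uplus P1 P2).AS ≠ natJoin P1 P2 P1.AS P2.AS := by
  obtain ⟨a⟩ := ‹Nonempty A›
  have derived : ({a} : Set A) ⊆ {a} := Set.Subset.rfl
  have underived : (∅ : Set A) ⊆ {a} := Set.empty_subset _
  have common_output : ({a} : Set A) ∩ {a} ≠ ∅ := by simp
  have disagree : ({a} : Set A) ∩ {a} ≠ ∅ ∩ {a} := by simp
  exact ⟨factModule {a} {a}, factModule ∅ {a}, factModule.wf derived, factModule.wf underived,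
    factModule.uplusDefined _ _ _ _, factModule.mutuallyIndependent _ _ _ _, common_output,
    factModule.AS_uplus_ne_natJoin derived underived disagree⟩

/-- Allowing common output atoms invalidates the module theorem: there exist
modules respecting each other's hidden atoms and mutually independent, but with
`O1 ∩ O2 ≠ ∅`, for which `AS(P1 ⊎ P2) ≠ AS(P1) ⋈ AS(P2)`. -/
theorem common_outputs_invalidate_module_theorem {A : Type*}
    (e1 e2 e3 : A) (h12 : e1 ≠ e2) (h13 : e1 ≠ e3) (h23 : e2 ≠ e3) :
    ∃ P1 P2 : PreModule A,
      P1.wf ∧ P2.wf ∧ uplusDefined P1 P2 ∧ mutuallyIndependent P1 P2 ∧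
      P1.O ∩ P2.O ≠ ∅ ∧
      (uplus P1 P2).AS ≠ natJoin P1 P2 P1.AS P2.AS := by
  have : Nonempty A := ⟨e1⟩
  exact common_outputs_invalidate_module_theorem_general
end

section
/- Positive cyclic dependencies between modules invalidate the module theorem: there exist ASP program modules P1 and P2 with O1 ∩ O2 = ∅ that respect each other's hidden atoms (so P1 ⊕ P2 is defined) but are not mutually independent, such that AS(P1 ⊕ P2) ≠ AS(P1) ⋈ AS(P2). (Witnesses: P1 = ⟨{airbag ← safe.}, {safe}, {airbag}, ∅⟩ and P2 = ⟨{safe ← airbag.}, {airbag}, {safe}, ∅⟩, for which AS(P1) = AS(P2) = {∅, {airbag, safe}}, AS(P1 ⊕ P2) = {∅}, while AS(P1) ⋈ AS(P2) = {∅, {airbag, safe}}.) -/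
/-!
The rules of both modules are definite (no choice, negation or constraint), so the reduct does not
depend on the interpretation and a stable model is the least set closed under the rules and input
facts. Taken alone, each module treats the body atom of its rule as an input that may freely be
assumed true, which supports `{airbag, safe}`. In the composition both atoms become outputs and
could only support each other in a circle, so the least closed set is empty.
-/

open scoped Classical

section DefinitePrograms

variable {A : Type*} {R R₁ R₂ : Set (ASPRule A)} {M S X : Set A}

/-- A definite program: every rule has a head and only positive body atoms, and none is a choice
fact. -/
def IsDefinite (R : Set (ASPRule A)) : Prop :=
  ∀ r ∈ R, ∃ b B, r = ⟨some b, false, B, ∅⟩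

/-- Closure of a set of atoms under the rules of a program, reading each rule as the implication
from its positive body to its head. Negative bodies and choice flags are ignored, so this is the
classical notion of model only for definite programs. -/
def IsClosedUnder (R : Set (ASPRule A)) (S : Set A) : Prop :=
  ∀ r ∈ R, r.pos ⊆ S → ∀ b ∈ r.head, b ∈ S

theorem IsDefinite.union (h₁ : IsDefinite R₁) (h₂ : IsDefinite R₂) : IsDefinite (R₁ ∪ R₂) :=
  fun r hr => hr.elim (h₁ r) (h₂ r)

theorem isDefinite_inputFacts (X : Set A) : IsDefinite (inputFacts X) := by
  rintro r ⟨a, -, rfl⟩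
  exact ⟨a, ∅, rfl⟩

theorem isClosedUnder_union :
    IsClosedUnder (R₁ ∪ R₂) S ↔ IsClosedUnder R₁ S ∧ IsClosedUnder R₂ S := by
  simp only [IsClosedUnder, Set.mem_union, or_imp, forall_and]

theorem isClosedUnder_inputFacts : IsClosedUnder (inputFacts X) S ↔ X ⊆ S := by
  constructor
  · intro h a ha
    exact h _ ⟨a, ha, rfl⟩ (Set.empty_subset S) a rfl
  · rintro h r ⟨a, ha, rfl⟩ - b hb
    obtain rfl := Option.some.inj hb
    exact h ha

theorem isLeast_LM (Q : Set (A × Set A)) :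
    IsLeast {S | ∀ p ∈ Q, p.2 ⊆ S → p.1 ∈ S} (LM Q) :=
  ⟨fun p hp hpos _ hS => hS p hp (hpos.trans (Set.sInter_subset_of_mem hS)),
    fun _ => Set.sInter_subset_of_mem⟩

theorem IsDefinite.forall_mem_reduct_iff (hR : IsDefinite R) :
    (∀ p ∈ reduct R M, p.2 ⊆ S → p.1 ∈ S) ↔ IsClosedUnder R S := by
  constructor
  · intro h r hr hpos b hb
    obtain ⟨c, B, rfl⟩ := hR r hr
    exact h (b, B) ⟨_, hr, .inl ⟨rfl, hb, rfl, Set.empty_inter M⟩⟩ hpos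
  · rintro h p ⟨r, hr, ⟨-, hhead, hpos, -⟩ | ⟨hchoice, -⟩⟩ hp
    · exact h r hr (hpos ▸ hp) p.1 hhead
    · obtain ⟨b, B, rfl⟩ := hR r hr
      cases hchoice

theorem IsDefinite.stableModel_iff_isLeast (hR : IsDefinite R) :
    stableModel R M ↔ IsLeast {S | IsClosedUnder R S} M := by
  have hLM : IsLeast {S | IsClosedUnder R S} (LM (reduct R M)) := by
    simpa only [hR.forall_mem_reduct_iff] using isLeast_LM (reduct R M)
  have hconstraints : ∀ r ∈ R, r.head = none → r.neg ∩ M = ∅ → ¬ r.pos ⊆ M := by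
    intro r hr hnone
    obtain ⟨b, B, rfl⟩ := hR r hr
    cases hnone
  exact ⟨fun h => h.1 ▸ hLM, fun h => ⟨h.unique hLM, hconstraints⟩⟩

end DefinitePrograms

namespace PreModule

variable {A : Type*} {P P₁ P₂ : PreModule A} {M : Set A}

theorem mem_AS_iff_isLeast (hP : IsDefinite P.rules) :
    M ∈ P.AS ↔
      M ⊆ P.atoms ∧ IsLeast {S | IsClosedUnder P.rules S ∧ M ∩ P.I ⊆ S} M := by
  simp only [AS, Set.mem_ofPred_eq, (hP.union (isDefinite_inputFacts _)).stableModel_iff_isLeast,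
    isClosedUnder_union, isClosedUnder_inputFacts]

theorem AS_eq_singleton_empty (hP : IsDefinite P.rules) (hI : P.I = ∅)
    (hclosed : IsClosedUnder P.rules ∅) : P.AS = {∅} := by
  ext M
  rw [mem_AS_iff_isLeast hP, hI, Set.mem_singleton_iff]
  constructor
  · rintro ⟨-, -, hleast⟩
    exact Set.subset_empty_iff.mp (hleast ⟨hclosed, by simp⟩)
  · rintro rfl
    exact ⟨Set.empty_subset _, ⟨hclosed, by simp⟩, fun S _ => Set.empty_subset S⟩

theorem natJoin_eq_inter {A₁ A₂ : Set (Set A)} (h₁ : A₁ ⊆ 𝒫 P₂.Atv) (h₂ : A₂ ⊆ 𝒫 P₁.Atv) :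
    natJoin P₁ P₂ A₁ A₂ = A₁ ∩ A₂ := by
  ext M
  constructor
  · rintro ⟨M₁, hM₁, M₂, hM₂, hagree, rfl⟩
    obtain rfl : M₁ = M₂ := by
      rwa [Set.inter_eq_left.mpr (h₁ hM₁), Set.inter_eq_left.mpr (h₂ hM₂)] at hagree
    rw [Set.union_self]
    exact ⟨hM₁, hM₂⟩
  · rintro ⟨hM₁, hM₂⟩
    refine ⟨M, hM₁, M, hM₂, ?_, (Set.union_self M).symm⟩
    rw [Set.inter_eq_left.mpr (h₁ hM₁), Set.inter_eq_left.mpr (h₂ hM₂)]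

theorem natJoin_AS_eq_inter (h₁ : P₁.atoms ⊆ P₂.Atv) (h₂ : P₂.atoms ⊆ P₁.Atv) :
    natJoin P₁ P₂ P₁.AS P₂.AS = P₁.AS ∩ P₂.AS :=
  natJoin_eq_inter (fun _ hM => hM.1.trans h₁) (fun _ hM => hM.1.trans h₂)

end PreModule

section SingleRuleModules

variable {A : Type*} {a b c : A} {B C M : Set A}

/-- The module `⟨{b ← B}, B, {b}, ∅⟩`, whose single rule derives the output `b` from the
inputs `B`. -/
def singleRuleModule (b : A) (B : Set A) : PreModule A :=
  ⟨{⟨some b, false, B, ∅⟩}, B, {b}, ∅⟩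

theorem isDefinite_singleRuleModule (b : A) (B : Set A) :
    IsDefinite (singleRuleModule b B).rules := by
  rintro r rfl
  exact ⟨b, B, rfl⟩

theorem isClosedUnder_singleRuleModule :
    IsClosedUnder (singleRuleModule b B).rules M ↔ (B ⊆ M → b ∈ M) := by
  simp [IsClosedUnder, singleRuleModule]

theorem atoms_singleRuleModule (b : A) (B : Set A) :
    (singleRuleModule b B).atoms = insert b B := by
  simp [PreModule.atoms, singleRuleModule]

theorem Atv_singleRuleModule (b : A) (B : Set A) :
    (singleRuleModule b B).Atv = insert b B := by
  simp [PreModule.Atv, singleRuleModule]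

theorem wf_singleRuleModule (hb : b ∉ B) : (singleRuleModule b B).wf := by
  refine ⟨Set.disjoint_singleton_right.mpr hb, Set.disjoint_empty _, Set.disjoint_empty _, ?_, ?_⟩
  · rw [atoms_singleRuleModule]
    simp [singleRuleModule, progAtoms, ASPRule.atoms]
  · rintro r rfl c hc
    obtain rfl := Option.some.inj hc
    exact hb

theorem mem_AS_singleRuleModule (hb : b ∉ B) :
    M ∈ (singleRuleModule b B).AS ↔ M ⊆ insert b B ∧ (b ∈ M ↔ B ⊆ M) := by
  rw [PreModule.mem_AS_iff_isLeast (isDefinite_singleRuleModule b B), atoms_singleRuleModule]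
  simp only [isClosedUnder_singleRuleModule]
  refine and_congr_right fun hM => ⟨?_, fun hiff => ⟨⟨hiff.mpr, Set.inter_subset_left⟩, ?_⟩⟩
  · rintro ⟨⟨hclosed, -⟩, hleast⟩
    refine ⟨fun hbM => ?_, hclosed⟩
    by_contra hBM
    -- If the body is not satisfied, then the true inputs alone are already closed.
    have hsub : M ⊆ M ∩ B :=
      hleast ⟨fun h => absurd (h.trans Set.inter_subset_left) hBM, subset_rfl⟩
    exact hb (hsub hbM).2
  · rintro S ⟨hclosed, hinput⟩ x hx
    obtain rfl | hxB := hM hx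
    · exact hclosed fun y hy => hinput ⟨hiff.mp hx hy, hy⟩
    · exact hinput ⟨hx, hxB⟩

theorem AS_singleRuleModule_singleton (hab : a ≠ b) :
    (singleRuleModule b {a}).AS = {∅, {b, a}} := by
  ext M
  rw [mem_AS_singleRuleModule (Set.notMem_singleton_iff.mpr hab.symm), Set.singleton_subset_iff,
    Set.mem_insert_iff, Set.mem_singleton_iff, Set.subset_pair_iff_eq]
  constructor
  · rintro ⟨rfl | rfl | rfl | rfl, hiff⟩ <;> simp_all
  · rintro (rfl | rfl) <;> simp

theorem oplusDefined_singleRuleModule (hbc : b ≠ c) :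
    oplusDefined (singleRuleModule b B) (singleRuleModule c C) :=
  ⟨Set.disjoint_iff_inter_eq_empty.mp (Set.disjoint_singleton.mpr hbc), Set.empty_inter _,
    Set.empty_inter _⟩

theorem not_mutuallyIndependent_singleRuleModule (hc : c ∈ B) (hb : b ∈ C) :
    ¬ mutuallyIndependent (singleRuleModule b B) (singleRuleModule c C) := by
  refine not_not_intro ⟨c, b, ?_, ?_, .single ⟨_, .inl rfl, rfl, hc⟩,
    .single ⟨_, .inr rfl, rfl, hb⟩⟩
  · exact atoms_singleRuleModule b B ▸ Set.mem_insert_of_mem b hc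
  · exact atoms_singleRuleModule c C ▸ Set.mem_insert_of_mem c hb

theorem AS_oplus_singleRuleModule_cycle (a b : A) :
    (oplus (singleRuleModule b {a}) (singleRuleModule a {b})).AS = {∅} := by
  refine PreModule.AS_eq_singleton_empty
    ((isDefinite_singleRuleModule b {a}).union (isDefinite_singleRuleModule a {b})) ?_
    (isClosedUnder_union.mpr ⟨?_, ?_⟩)
  · simp [oplus, singleRuleModule]
  all_goals simp [isClosedUnder_singleRuleModule]

theorem natJoin_AS_singleRuleModule_cycle (hab : a ≠ b) :
    natJoin (singleRuleModule b {a}) (singleRuleModule a {b})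
      (singleRuleModule b {a}).AS (singleRuleModule a {b}).AS = {∅, {b, a}} := by
  have hvisible (c d : A) : (singleRuleModule c {d}).atoms ⊆ (singleRuleModule d {c}).Atv := by
    rw [atoms_singleRuleModule, Atv_singleRuleModule, Set.pair_comm]
  rw [PreModule.natJoin_AS_eq_inter (hvisible b a) (hvisible a b),
    AS_singleRuleModule_singleton hab, AS_singleRuleModule_singleton hab.symm,
    Set.pair_comm a b, Set.inter_self]

end SingleRuleModules

/-- Positive cyclic dependencies between modules invalidate the module theorem:
there exist modules `P1 = ⟨{airbag ← safe}, {safe}, {airbag}, ∅⟩` and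
`P2 = ⟨{safe ← airbag}, {airbag}, {safe}, ∅⟩` with `O1 ∩ O2 = ∅` and `P1 ⊕ P2`
defined but not mutually independent, such that `AS(P1) = AS(P2) =
{∅, {airbag, safe}}`, `AS(P1 ⊕ P2) = {∅}`, while `AS(P1) ⋈ AS(P2) =
{∅, {airbag, safe}}`, so `AS(P1 ⊕ P2) ≠ AS(P1) ⋈ AS(P2)`. -/
theorem positive_cycles_invalidate_module_theorem {A : Type*}
    (safe airbag : A) (hne : safe ≠ airbag) :
    ∃ P1 P2 : PreModule A,
      P1 = ⟨{⟨some airbag, false, {safe}, ∅⟩}, {safe}, {airbag}, ∅⟩ ∧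
      P2 = ⟨{⟨some safe, false, {airbag}, ∅⟩}, {airbag}, {safe}, ∅⟩ ∧
      P1.wf ∧ P2.wf ∧ P1.O ∩ P2.O = ∅ ∧ oplusDefined P1 P2 ∧
      ¬ mutuallyIndependent P1 P2 ∧
      P1.AS = {∅, {airbag, safe}} ∧ P2.AS = {∅, {airbag, safe}} ∧
      (oplus P1 P2).AS = {∅} ∧
      natJoin P1 P2 P1.AS P2.AS = {∅, {airbag, safe}} ∧
      (oplus P1 P2).AS ≠ natJoin P1 P2 P1.AS P2.AS := by
  have hoplus := AS_oplus_singleRuleModule_cycle safe airbag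
  have hjoin := natJoin_AS_singleRuleModule_cycle hne
  have hdefined := oplusDefined_singleRuleModule (B := {safe}) (C := {airbag}) hne.symm
  refine ⟨singleRuleModule airbag {safe}, singleRuleModule safe {airbag}, rfl, rfl,
    wf_singleRuleModule hne.symm, wf_singleRuleModule hne, hdefined.1, hdefined,
    not_mutuallyIndependent_singleRuleModule rfl rfl, AS_singleRuleModule_singleton hne,
    Set.pair_comm airbag safe ▸ AS_singleRuleModule_singleton hne.symm, hoplus, hjoin, ?_⟩
  rw [hoplus, hjoin]
  exact fun h => (Set.insert_nonempty airbag {safe}).ne_empty (h.ge (.inr rfl))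
end
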